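/- arXiv:1502.02771 — 8 statements merged into one kernel-verified Lean document; each statement's English description precedes it below -/
import Mathlib

section
/- Let X be a set and δ a Lodato proximity on X. Define the relation ν on subsets of X by A ν B iff it is NOT the case that A is δ-strongly far from B. Then ν is a basic proximity, i.e. for all A, B, C ⊆ X: (P0) A ν B → B ν A; (P1) A ν B → A ≠ ∅ and B ≠ ∅; (P2) A ∩ B ≠ ∅ → A ν B; (P3) A ν (B ∪ C) ↔ (A ν B or A ν C). -/
/-!
Call `C` a separator of `A` and `B` when `A ≁ Cᶜ` and `C ≁ B`. The complement of a separator of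
`A` and `B` separates `B` and `A`, which gives (P0). The empty set separates `∅` from everything,
which with symmetry gives (P1), and (P2) is inherited from `δ` since strongly far sets are far.
For (P3), a separator of `A` and `B ∪ C` also separates `A` from `B` and from `C` by monotonicity
of `δ`; conversely, the intersection of separators of `A` from `B` and of `A` from `C` separates
`A` from `B ∪ C`.
-/

/-- A Lodato proximity on a set (type) `X`: a relation on subsets of `X`
satisfying axioms (P0)–(P4). -/
structure LodatoProximity (X : Type*) where
  rel : Set X → Set X → Prop
  symm : ∀ A B : Set X, rel A B → rel B A
  nonempty_of_rel : ∀ A B : Set X, rel A B → A ≠ ∅ ∧ B ≠ ∅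
  rel_of_inter : ∀ A B : Set X, A ∩ B ≠ ∅ → rel A B
  rel_union : ∀ A B C : Set X, rel A (B ∪ C) ↔ rel A B ∨ rel A C
  lodato : ∀ A B C : Set X, rel A B → (∀ b ∈ B, rel {b} C) → rel A C

/-- `A` is δ-strongly far from `B`: `A ≁ B` and there is `C ⊆ X` with
`A ≁ X \ C` and `C ≁ B`. -/
def LodatoProximity.StronglyFar {X : Type*} (δ : LodatoProximity X)
    (A B : Set X) : Prop :=
  ¬ δ.rel A B ∧ ∃ C : Set X, ¬ δ.rel A Cᶜ ∧ ¬ δ.rel C B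

namespace LodatoProximity

variable {X : Type*} (δ : LodatoProximity X)

theorem rel_mono_right {A B B' : Set X} (h : B ⊆ B') (hr : δ.rel A B) : δ.rel A B' := by
  rw [← Set.union_eq_self_of_subset_left h]
  exact (δ.rel_union A B B').2 (Or.inl hr)

theorem rel_mono_left {A A' B : Set X} (h : A ⊆ A') (hr : δ.rel A B) : δ.rel A' B :=
  δ.symm _ _ (δ.rel_mono_right h (δ.symm _ _ hr))

/-- If `C` separates `A` from `B`, then `Cᶜ` separates `B` from `A`. -/
theorem StronglyFar.symm {A B : Set X} (h : δ.StronglyFar A B) : δ.StronglyFar B A := by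
  obtain ⟨hAB, C, hAC, hCB⟩ := h
  refine ⟨fun h => hAB (δ.symm _ _ h), Cᶜ, fun h => hCB ?_, fun h => hAC (δ.symm _ _ h)⟩
  rw [compl_compl] at h
  exact δ.symm _ _ h

theorem StronglyFar.mono_right {A B B' : Set X} (h : B ⊆ B') (hf : δ.StronglyFar A B') :
    δ.StronglyFar A B := by
  obtain ⟨hAB, C, hAC, hCB⟩ := hf
  exact ⟨fun hr => hAB (δ.rel_mono_right h hr), C, hAC, fun hr => hCB (δ.rel_mono_right h hr)⟩

/-- If `D` separates `A` from `B` and `E` separates `A` from `C`, then `D ∩ E` separates `A`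
from `B ∪ C`. -/
theorem StronglyFar.union_right {A B C : Set X} (hB : δ.StronglyFar A B)
    (hC : δ.StronglyFar A C) : δ.StronglyFar A (B ∪ C) := by
  obtain ⟨hAB, D, hAD, hDB⟩ := hB
  obtain ⟨hAC, E, hAE, hEC⟩ := hC
  refine ⟨fun h => ((δ.rel_union _ _ _).1 h).elim hAB hAC, D ∩ E, fun h => ?_, fun h => ?_⟩
  · rw [Set.compl_inter] at h
    exact ((δ.rel_union _ _ _).1 h).elim hAD hAE
  · exact ((δ.rel_union _ _ _).1 h).elim
      (fun h => hDB (δ.rel_mono_left Set.inter_subset_left h))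
      (fun h => hEC (δ.rel_mono_left Set.inter_subset_right h))

theorem stronglyFar_empty_left (B : Set X) : δ.StronglyFar ∅ B :=
  ⟨fun h => (δ.nonempty_of_rel _ _ h).1 rfl, ∅, fun h => (δ.nonempty_of_rel _ _ h).1 rfl,
    fun h => (δ.nonempty_of_rel _ _ h).1 rfl⟩

end LodatoProximity

/-- The relation `ν` defined by `A ν B` iff `A` is not δ-strongly far from `B`
is a basic proximity: it satisfies (P0)–(P3). -/
theorem not_stronglyFar_isBasicProximity {X : Type*} (δ : LodatoProximity X) :
    (∀ A B : Set X, ¬ δ.StronglyFar A B → ¬ δ.StronglyFar B A) ∧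
    (∀ A B : Set X, ¬ δ.StronglyFar A B → A ≠ ∅ ∧ B ≠ ∅) ∧
    (∀ A B : Set X, A ∩ B ≠ ∅ → ¬ δ.StronglyFar A B) ∧
    (∀ A B C : Set X,
      (¬ δ.StronglyFar A (B ∪ C)) ↔ (¬ δ.StronglyFar A B ∨ ¬ δ.StronglyFar A C)) := by
  refine ⟨fun A B h h' => h (LodatoProximity.StronglyFar.symm δ h'), fun A B h => ⟨?_, ?_⟩,
    fun A B h h' => h'.1 (δ.rel_of_inter A B h), fun A B C => ?_⟩
  · rintro rfl
    exact h (δ.stronglyFar_empty_left B)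
  · rintro rfl
    exact h (LodatoProximity.StronglyFar.symm δ (δ.stronglyFar_empty_left A))
  · rw [← not_and_or, not_iff_not]
    exact ⟨fun h => ⟨LodatoProximity.StronglyFar.mono_right δ Set.subset_union_left h,
      LodatoProximity.StronglyFar.mono_right δ Set.subset_union_right h⟩,
      fun h => LodatoProximity.StronglyFar.union_right δ h.1 h.2⟩
end

section
/- Let X be a topological space and δ a compatible Lodato proximity on X. If A is δ-strongly far from B, then A is δ̂-strongly far from B; that is, there exist subsets E, C ⊆ X such that A ⊆ interior(closure E), B ⊆ interior(closure C), and interior(closure E) ∩ interior(closure C) = ∅. -/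
/-- `δ` is compatible with the topology of `X`:
`closure A = {x : {x} δ A}` for every `A`. -/
def LodatoProximity.Compatible {X : Type*} [TopologicalSpace X]
    (δ : LodatoProximity X) : Prop :=
  ∀ A : Set X, closure A = {x : X | δ.rel {x} A}

/-- In a compatible proximity, a set far from
the complement of `C` lies in the interior of `C`. -/
theorem LodatoProximity.Compatible.subset_interior {X : Type*} [TopologicalSpace X]
    {δ : LodatoProximity X} (hδ : δ.Compatible) {A C : Set X} (h : ¬ δ.rel A Cᶜ) :
    A ⊆ interior C := by
  intro x hx
  rw [← Set.notMem_compl_iff, ← closure_compl, hδ]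
  intro hxC
  -- Monotonicity of `δ`, read off from `rel_union`, enlarges `{x}` to `A`.
  have hA : δ.rel Cᶜ ({x} ∪ A) := (δ.rel_union _ _ _).2 (Or.inl (δ.symm _ _ hxC))
  rw [Set.union_eq_self_of_subset_left (Set.singleton_subset_iff.2 hx)] at hA
  exact h (δ.symm _ _ hA)

/-- If `A` is δ-strongly far from `B` (for a compatible Lodato proximity),
then `A` is δ̂-strongly far from `B`. -/
theorem stronglyFar_imp_hat_stronglyFar {X : Type*} [TopologicalSpace X]
    (δ : LodatoProximity X) (hδ : δ.Compatible) (A B : Set X)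
    (h : δ.StronglyFar A B) :
    ∃ E C : Set X, A ⊆ interior (closure E) ∧ B ⊆ interior (closure C) ∧
      interior (closure E) ∩ interior (closure C) = ∅ := by
  obtain ⟨-, C, hAC, hCB⟩ := h
  have hA : A ⊆ interior C := hδ.subset_interior hAC
  have hB : B ⊆ interior Cᶜ :=
    hδ.subset_interior (by rw [compl_compl]; exact fun h => hCB (δ.symm _ _ h))
  have hdisj : Disjoint (interior C) (interior Cᶜ) :=
    disjoint_compl_right.mono interior_subset interior_subset
  refine ⟨interior C, interior Cᶜ,
    hA.trans (interior_maximal subset_closure isOpen_interior),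
    hB.trans (interior_maximal subset_closure isOpen_interior), ?_⟩
  -- Disjoint open sets have disjoint regularizations: an open set missing `U` misses `closure U`,
  -- which is applied once on each side.
  have h₁ : Disjoint (closure (interior C)) (interior Cᶜ) := hdisj.closure_left isOpen_interior
  have h₂ : Disjoint (interior (closure (interior C))) (closure (interior Cᶜ)) :=
    (h₁.mono_left interior_subset).closure_right isOpen_interior
  exact (h₂.mono_right interior_subset).inter_eq
end

section
/- Let X be a T1 topological space and δ a compatible Lodato proximity on X, and let B, C be closed subsets of X. If every nonempty closed subset E of X with E ≁ B satisfies E ⩥ C (i.e., (X\B)⁺⁺ ⊆ (X\C)_⩥ in the hyperspace of nonempty closed sets), then C ⊆ B. -/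
/-- If every nonempty closed `E` with `E ≁ B` satisfies `E ⩥ C`
(i.e. `(X \ B)⁺⁺ ⊆ (X \ C)_⩥`), then `C ⊆ B`. -/
theorem subset_of_farMiss_subset_strongFarMiss {X : Type*} [TopologicalSpace X]
    [T1Space X] (δ : LodatoProximity X) (hδ : δ.Compatible) (B C : Set X)
    (hB : IsClosed B) (hC : IsClosed C)
    (h : ∀ E : Set X, E.Nonempty → IsClosed E → ¬ δ.rel E B → δ.StronglyFar E C) :
    C ⊆ B := by
  intro x hxC
  by_contra hxB
  -- Points are closed, and compatibility makes a point outside the closed set `B` far from `B`.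
  have hfar : ¬ δ.rel {x} B := fun hr => hxB <| by
    have hx : x ∈ closure B := by
      rw [hδ B]
      exact hr
    rwa [hB.closure_eq] at hx
  -- So `{x}` is far from `C`, although the two sets meet at `x`.
  exact (h {x} (Set.singleton_nonempty x) isClosed_singleton hfar).1
    (δ.rel_of_inter {x} C (Set.Nonempty.ne_empty ⟨x, rfl, hxC⟩))
end

section
/- Let X = ℚ with its usual (subspace) topology and δ_A the Alexandroff proximity on X. On CL(X), the hyperspace of nonempty closed subsets of X, the topology τ_δ⁺⁺ generated by the subbase {A⁺⁺ : A open in X} is not contained in the topology τ_⩥⁺ generated by the subbase {A_⩥ : A open in X}; that is, there is a τ_δ⁺⁺-open subset of CL(X) that is not τ_⩥⁺-open. -/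
/-!
Compact subsets of `ℚ` have empty interior, so if a point `p` is strongly far from the closed set
`Aᶜ`, then the intermediate set `C`, a neighbourhood of `p`, has non-compact closure, which forces
`Aᶜ` to be compact. Conversely every point of a cocompact open `A` is strongly far from `Aᶜ`.
Hence each `τ_⩥⁺`-open set containing one singleton contains `{q}` for all `q` outside some compact
set (`exists_compact_of_generateOpen`). The `τ_δ⁺⁺`-open set `(Iio 1)⁺⁺` contains `{0}` but no `{q}`
with `1 ≤ q`, and `Ici 1` lies in no compact set.
-/

/-- The Alexandroff proximity on a topological space:
`A δ_A B` iff the closures meet, or both closures are non-compact. -/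
def alexRel {X : Type*} [TopologicalSpace X] (A B : Set X) : Prop :=
  (closure A ∩ closure B).Nonempty ∨
    (¬ IsCompact (closure A) ∧ ¬ IsCompact (closure B))

/-- `A` is δ_A-strongly far from `B`. -/
def alexStronglyFar {X : Type*} [TopologicalSpace X] (A B : Set X) : Prop :=
  ¬ alexRel A B ∧ ∃ C : Set X, ¬ alexRel A Cᶜ ∧ ¬ alexRel C B

/-- The hyperspace `CL(ℚ)` of nonempty closed subsets of `ℚ`. -/
def CLQ : Type := {E : Set ℚ // E.Nonempty ∧ IsClosed E}

/-- The far-miss topology `τ_δ⁺⁺` on `CL(ℚ)` for the Alexandroff proximity,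
generated by the subbase of all sets `A⁺⁺ = {E : E ≁ ℚ \ A}`, `A` open. -/
def tauFarMiss : TopologicalSpace CLQ :=
  TopologicalSpace.generateFrom
    {U : Set CLQ | ∃ A : Set ℚ, IsOpen A ∧ U = {E : CLQ | ¬ alexRel E.1 Aᶜ}}

/-- The strongly-far-miss topology `τ_⩥⁺` on `CL(ℚ)` for the Alexandroff
proximity, generated by the subbase of all sets
`A_⩥ = {E : E ⩥ ℚ \ A}`, `A` open. -/
def tauStrongFarMiss : TopologicalSpace CLQ :=
  TopologicalSpace.generateFrom
    {U : Set CLQ | ∃ A : Set ℚ, IsOpen A ∧ U = {E : CLQ | alexStronglyFar E.1 Aᶜ}}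

/-- The singleton `{q}` as a point of the hyperspace `CL(ℚ)`. -/
def singletonCLQ (q : ℚ) : CLQ := ⟨{q}, Set.singleton_nonempty q, isClosed_singleton⟩

lemma isCompact_of_singleton_stronglyFar {p : ℚ} {B : Set ℚ} (hB : IsClosed B)
    (h : alexStronglyFar {p} B) : IsCompact B := by
  obtain ⟨-, C, h1, h2⟩ := h
  simp only [alexRel, not_or] at h1 h2
  by_contra hc
  have hC : IsCompact (closure C) := by
    by_contra hC
    exact h2.2 ⟨hC, by rwa [hB.closure_eq]⟩
  have hp : p ∈ interior (closure C) := by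
    apply interior_mono subset_closure
    by_contra hp
    rw [← Set.mem_compl_iff, ← closure_compl] at hp
    exact h1.1 ⟨p, subset_closure rfl, hp⟩
  rw [Rat.interior_compact_eq_empty hC] at hp
  exact hp

lemma singleton_stronglyFar {q : ℚ} {B : Set ℚ} (hB : IsCompact B) (hq : q ∉ B) :
    alexStronglyFar {q} B := by
  have hcl : closure B = B := hB.isClosed.closure_eq
  refine ⟨?_, ?_⟩
  · rintro (⟨x, hx, hx'⟩ | ⟨h, -⟩)
    · rw [closure_singleton, Set.mem_singleton_iff] at hx
      rw [hcl] at hx'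
      exact hq (hx ▸ hx')
    · exact h (by simp)
  -- By regularity, `C` can be taken to be a closed neighbourhood of `q` inside `Bᶜ`.
  · obtain ⟨C, hC, hCc, hCB⟩ :=
      exists_mem_nhds_isClosed_subset (hB.isClosed.isOpen_compl.mem_nhds hq)
    refine ⟨C, ?_, ?_⟩
    · rintro (⟨x, hx, hx'⟩ | ⟨h, -⟩)
      · rw [closure_singleton, Set.mem_singleton_iff] at hx
        rw [closure_compl, hx] at hx'
        exact hx' (mem_interior_iff_mem_nhds.2 hC)
      · exact h (by simp)
    · rintro (⟨x, hx, hx'⟩ | ⟨-, h⟩)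
      · rw [hCc.closure_eq] at hx
        rw [hcl] at hx'
        exact hCB hx hx'
      · exact h (by rwa [hcl])

/-- A `τ_⩥⁺`-open set containing one singleton contains the singletons of all points outside
some compact set. -/
lemma exists_compact_of_generateOpen {V : Set CLQ} {p : ℚ}
    (hV : TopologicalSpace.GenerateOpen
      {U : Set CLQ | ∃ A : Set ℚ, IsOpen A ∧ U = {E : CLQ | alexStronglyFar E.1 Aᶜ}} V)
    (hp : singletonCLQ p ∈ V) :
    ∃ K : Set ℚ, IsCompact K ∧ ∀ q ∉ K, singletonCLQ q ∈ V := by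
  induction hV with
  | basic s hs =>
    obtain ⟨A, hA, rfl⟩ := hs
    have hK : IsCompact Aᶜ := isCompact_of_singleton_stronglyFar hA.isClosed_compl hp
    exact ⟨Aᶜ, hK, fun q hq => singleton_stronglyFar hK hq⟩
  | univ => exact ⟨∅, isCompact_empty, fun _ _ => trivial⟩
  | inter s t _ _ ihs iht =>
    obtain ⟨K, hK, hKs⟩ := ihs hp.1
    obtain ⟨L, hL, hLt⟩ := iht hp.2
    exact ⟨K ∪ L, hK.union hL, fun q hq =>
      ⟨hKs q fun h => hq (Or.inl h), hLt q fun h => hq (Or.inr h)⟩⟩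
  | sUnion S _ ih =>
    obtain ⟨s, hsS, hps⟩ := hp
    obtain ⟨K, hK, hKs⟩ := ih s hsS hps
    exact ⟨K, hK, fun q hq => ⟨s, hsS, hKs q hq⟩⟩

/-- On `CL(ℚ)` with the Alexandroff proximity, `τ_δ⁺⁺` is not contained in
`τ_⩥⁺`: some `τ_δ⁺⁺`-open set is not `τ_⩥⁺`-open. -/
theorem tauFarMiss_not_subset_tauStrongFarMiss :
    ∃ U : Set CLQ, tauFarMiss.IsOpen U ∧ ¬ tauStrongFarMiss.IsOpen U := by
  refine ⟨{E : CLQ | ¬ alexRel E.1 (Set.Iio (1 : ℚ))ᶜ},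
    TopologicalSpace.GenerateOpen.basic _ ⟨Set.Iio 1, isOpen_Iio, rfl⟩, fun hopen => ?_⟩
  have h0 : singletonCLQ 0 ∈ {E : CLQ | ¬ alexRel E.1 (Set.Iio (1 : ℚ))ᶜ} := by
    rintro (⟨x, hx, hx'⟩ | ⟨h, -⟩)
    · rw [isOpen_Iio.isClosed_compl.closure_eq] at hx'
      have hx0 : x = 0 := by simpa [singletonCLQ] using hx
      simp [hx0] at hx'
      linarith
    · exact h (by simp [singletonCLQ])
  obtain ⟨K, hK, hKU⟩ := exists_compact_of_generateOpen hopen h0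
  obtain ⟨b, hb⟩ := hK.bddAbove
  have hq : max b 0 + 1 ∉ K := fun h => by
    have h1 := hb h
    have h2 := le_max_left b 0
    linarith
  refine hKU _ hq (Or.inl ⟨max b 0 + 1, subset_closure rfl, subset_closure ?_⟩)
  simp
end

section
/- Let X be a T1 topological space. Then the Alexandroff proximity δ_A is a separated Lodato proximity compatible with the topology of X: it satisfies axioms (P0)–(P4), satisfies {x} δ_A {y} → x = y, and for every A ⊆ X, closure(A) = {x ∈ X : {x} δ_A A}. -/
/-- `δ_A` only grows when the closure of the second set grows: a closed subset of a compact set is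
compact. -/
lemma alexRel_mono_right {X : Type*} [TopologicalSpace X] {A B C : Set X}
    (hBC : closure B ⊆ closure C) (h : alexRel A B) : alexRel A C := by
  rcases h with h | ⟨hA, hB⟩
  · exact Or.inl (h.mono (Set.inter_subset_inter_right _ hBC))
  · exact Or.inr ⟨hA, fun hC => hB (hC.of_isClosed_subset isClosed_closure hBC)⟩

lemma alexRel_singleton_iff {X : Type*} [TopologicalSpace X] [T1Space X] {x : X} {A : Set X} :
    alexRel {x} A ↔ x ∈ closure A := by
  simp [alexRel]

/-- For a T1 space, the Alexandroff proximity is a separated Lodato proximity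
compatible with the topology. -/
theorem alexRel_isSeparatedCompatibleLodato {X : Type*} [TopologicalSpace X]
    [T1Space X] :
    (∀ A B : Set X, alexRel A B → alexRel B A) ∧
    (∀ A B : Set X, alexRel A B → A ≠ ∅ ∧ B ≠ ∅) ∧
    (∀ A B : Set X, A ∩ B ≠ ∅ → alexRel A B) ∧
    (∀ A B C : Set X, alexRel A (B ∪ C) ↔ alexRel A B ∨ alexRel A C) ∧
    (∀ A B C : Set X, alexRel A B → (∀ b ∈ B, alexRel {b} C) → alexRel A C) ∧
    (∀ x y : X, alexRel {x} {y} → x = y) ∧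
    (∀ A : Set X, closure A = {x : X | alexRel {x} A}) := by
  refine ⟨?_, ?_, ?_, ?_, ?_, ?_, ?_⟩
  · rintro A B (h | ⟨hA, hB⟩)
    · exact Or.inl (by rwa [Set.inter_comm])
    · exact Or.inr ⟨hB, hA⟩
  · intro A B h
    constructor <;> rintro rfl <;> simp [alexRel] at h
  · intro A B h
    exact Or.inl ((Set.nonempty_iff_ne_empty.mpr h).mono
      (Set.inter_subset_inter subset_closure subset_closure))
  · intro A B C
    constructor
    · rintro (h | ⟨hA, hBC⟩)
      · rw [closure_union, Set.inter_union_distrib_left, Set.union_nonempty] at h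
        exact h.imp Or.inl Or.inl
      · rw [closure_union] at hBC
        by_cases hB : IsCompact (closure B)
        · exact Or.inr (Or.inr ⟨hA, fun hC => hBC (hB.union hC)⟩)
        · exact Or.inl (Or.inr ⟨hA, hB⟩)
    · rintro (h | h)
      · exact alexRel_mono_right (closure_mono Set.subset_union_left) h
      · exact alexRel_mono_right (closure_mono Set.subset_union_right) h
  · intro A B C h hBC
    exact alexRel_mono_right
      (closure_minimal (fun b hb => alexRel_singleton_iff.mp (hBC b hb)) isClosed_closure) h
  · intro x y h
    simpa using alexRel_singleton_iff.mp h
  · intro A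
    ext x
    exact alexRel_singleton_iff.symm
end

section
/- The Alexandroff proximity δ_A on X = ℚ (with its usual subspace topology) is not an EF-proximity: there exist subsets A, B ⊆ ℚ with A ≁ B such that for every E ⊆ ℚ, either A δ_A E or (ℚ \ E) δ_A B. -/
/-- The Alexandroff proximity on `ℚ` is not an EF-proximity. -/
theorem alexRel_rat_not_EF :
    ∃ A B : Set ℚ, ¬ alexRel A B ∧
      ∀ E : Set ℚ, alexRel A E ∨ alexRel Eᶜ B := by
  have hB : ¬ IsCompact (closure (Set.Ici (1 : ℚ))) := fun h =>
    not_bddAbove_Ici (1 : ℚ) (h.bddAbove.mono subset_closure)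
  refine ⟨{0}, Set.Ici 1, ?_, fun E => ?_⟩
  · rintro (⟨x, hx, hx'⟩ | ⟨h, -⟩)
    · rw [closure_singleton, Set.mem_singleton_iff] at hx
      rw [isClosed_Ici.closure_eq, Set.mem_Ici, hx] at hx'
      norm_num at hx'
    · exact h (by simp)
  · by_cases h0 : (0 : ℚ) ∈ closure E
    · exact Or.inl (Or.inl ⟨0, subset_closure rfl, h0⟩)
    · refine Or.inr (Or.inr ⟨fun hc => ?_, hB⟩)
      -- `0` is interior to `Eᶜ`, but compact subsets of `ℚ` have empty interior.
      have h1 : (0 : ℚ) ∈ interior (closure Eᶜ) :=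
        interior_mono subset_closure (by rwa [interior_compl])
      rw [Rat.interior_compact_eq_empty hc] at h1
      exact h1
end

section
/- Let X be a topological space and δ a compatible basic proximity on X satisfying the EF property. If K ⊆ X is compact, W ⊆ X is open, and K ⊆ W, then K is strongly included in W, i.e., K ≁ X \ W. -/
/-!
Being far from `Wᶜ` is inherited by subsets and finite unions, so by compactness it suffices that
every `x ∈ K` has a neighbourhood far from `Wᶜ`. By compatibility `{x} ≁ Wᶜ`, and the Efremovič
property yields `E` with `{x} ≁ E` and `Eᶜ ≁ Wᶜ`; by compatibility again `x ∉ closure E`, so `Eᶜ`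
is such a neighbourhood.
-/

/-- A basic proximity on a set (type) `X`: a relation on subsets of `X`
satisfying axioms (P0)–(P3). -/
structure BasicProximity (X : Type*) where
  rel : Set X → Set X → Prop
  symm : ∀ A B : Set X, rel A B → rel B A
  nonempty_of_rel : ∀ A B : Set X, rel A B → A ≠ ∅ ∧ B ≠ ∅
  rel_of_inter : ∀ A B : Set X, A ∩ B ≠ ∅ → rel A B
  rel_union : ∀ A B C : Set X, rel A (B ∪ C) ↔ rel A B ∨ rel A C

/-- The Efremovič property: whenever `A ≁ B` there is `E` with `A ≁ E` and
`X \ E ≁ B`. -/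
def BasicProximity.EF {X : Type*} (δ : BasicProximity X) : Prop :=
  ∀ A B : Set X, ¬ δ.rel A B → ∃ E : Set X, ¬ δ.rel A E ∧ ¬ δ.rel Eᶜ B

/-- `δ` is compatible with the topology of `X`:
`closure A = {x : {x} δ A}` for every `A`. -/
def BasicProximity.Compatible {X : Type*} [TopologicalSpace X]
    (δ : BasicProximity X) : Prop :=
  ∀ A : Set X, closure A = {x : X | δ.rel {x} A}

theorem BasicProximity.rel_mono_left {X : Type*} (δ : BasicProximity X) {A B C : Set X}
    (h : A ⊆ B) (hA : δ.rel A C) : δ.rel B C := by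
  apply δ.symm
  rw [← Set.union_eq_self_of_subset_left h]
  exact (δ.rel_union C A B).2 (Or.inl (δ.symm _ _ hA))

/-- For a compatible EF basic proximity, a compact set contained in an open
set is strongly included in it. -/
theorem compact_strongly_included_of_subset_open {X : Type*} [TopologicalSpace X]
    (δ : BasicProximity X) (hδ : δ.Compatible) (hEF : δ.EF)
    (K W : Set X) (hK : IsCompact K) (hW : IsOpen W) (hKW : K ⊆ W) :
    ¬ δ.rel K Wᶜ := by
  refine hK.induction_on (p := fun s => ¬ δ.rel s Wᶜ) ?_ ?_ ?_ ?_
  · exact fun h => (δ.nonempty_of_rel _ _ h).1 rfl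
  · exact fun s t hst ht hs => ht (δ.rel_mono_left hst hs)
  · intro s t hs ht h
    rcases (δ.rel_union _ _ _).1 (δ.symm _ _ h) with h | h
    · exact hs (δ.symm _ _ h)
    · exact ht (δ.symm _ _ h)
  · intro x hx
    have hxW : ¬ δ.rel {x} Wᶜ := by
      intro h
      have hcl : x ∈ closure Wᶜ := by
        rw [hδ Wᶜ]
        exact h
      rw [hW.isClosed_compl.closure_eq] at hcl
      exact hcl (hKW hx)
    obtain ⟨E, hxE, hEW⟩ := hEF _ _ hxW
    have hxcl : x ∉ closure E := by
      rw [hδ E]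
      exact hxE
    refine ⟨Eᶜ, mem_nhdsWithin_of_mem_nhds ?_, hEW⟩
    rwa [← mem_interior_iff_mem_nhds, interior_compl]
end

section
/- Let X be a topological space and δ a compatible basic proximity on X satisfying the EF property. If W ⊆ X is open with compact complement X \ W, then for every closed subset E of X one has E ⊆ W if and only if E ≁ X \ W. Consequently the Fell miss set W⁺ = {E ∈ CL(X) : E ⊆ W} equals the far-miss set W⁺⁺ = {E ∈ CL(X) : E ≁ X\W}. -/
/-- Farness passes to subsets of the second argument, by the union axiom. -/
lemma BasicProximity.not_rel_mono {X : Type*} (δ : BasicProximity X) {A B C : Set X}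
    (hBC : B ⊆ C) (h : ¬ δ.rel A C) : ¬ δ.rel A B := fun hB =>
  h (by rw [← Set.union_eq_self_of_subset_left hBC]; exact (δ.rel_union A B C).2 (Or.inl hB))

/-- A closed set is far from some neighbourhood of each point outside it. -/
lemma BasicProximity.exists_nhds_not_rel {X : Type*} [TopologicalSpace X]
    (δ : BasicProximity X) (hδ : δ.Compatible) (hEF : δ.EF) {E : Set X} (hE : IsClosed E)
    {x : X} (hx : x ∉ E) : ∃ t ∈ nhds x, ¬ δ.rel E t := by
  have hxE : ¬ δ.rel {x} E := fun h => hx (by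
    rw [← hE.closure_eq, hδ E]; exact h)
  obtain ⟨D, hxD, hDE⟩ := hEF _ _ hxE
  have hxD' : x ∉ closure D := by rw [hδ D]; exact hxD
  exact ⟨Dᶜ, mem_interior_iff_mem_nhds.1 (by rwa [interior_compl]),
    fun h => hDE (δ.symm _ _ h)⟩

/-- For a compatible EF basic proximity and an open `W` with compact
complement, a closed set is contained in `W` iff it is far from `X \ W`;
hence the Fell miss set `W⁺` equals the far-miss set `W⁺⁺` in `CL(X)`. -/
theorem fell_miss_eq_farMiss {X : Type*} [TopologicalSpace X]
    (δ : BasicProximity X) (hδ : δ.Compatible) (hEF : δ.EF)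
    (W : Set X) (hW : IsOpen W) (hWc : IsCompact Wᶜ) :
    (∀ E : Set X, IsClosed E → (E ⊆ W ↔ ¬ δ.rel E Wᶜ)) ∧
    {E : {F : Set X // F.Nonempty ∧ IsClosed F} | E.1 ⊆ W} =
      {E : {F : Set X // F.Nonempty ∧ IsClosed F} | ¬ δ.rel E.1 Wᶜ} := by
  have key : ∀ E : Set X, IsClosed E → (E ⊆ W ↔ ¬ δ.rel E Wᶜ) := by
    intro E hE
    constructor
    · intro hEW
      refine hWc.induction_on (p := fun s => ¬ δ.rel E s) ?_ ?_ ?_ ?_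
      · exact fun h => (δ.nonempty_of_rel _ _ h).2 rfl
      · exact fun s t hst ht => δ.not_rel_mono hst ht
      · exact fun s t hs ht h => ((δ.rel_union _ _ _).1 h).elim hs ht
      · intro x hx
        obtain ⟨t, ht, hEt⟩ := δ.exists_nhds_not_rel hδ hEF hE (fun h => hx (hEW h))
        exact ⟨t, mem_nhdsWithin_of_mem_nhds ht, hEt⟩
    · intro h x hx
      by_contra hxW
      exact h (δ.rel_of_inter _ _ (Set.Nonempty.ne_empty ⟨x, hx, hxW⟩))
  exact ⟨key, Set.ext fun E => key E.1 E.2.2⟩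
end
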